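/- Let α = [0; a₁, a₂, …] ∈ (0,1) be irrational with (aₙ) bounded and let (qₙ) be the denominators of the convergents of α. Then t^s_{(qₙ)}(𝕋) is an uncountable subgroup of 𝕋 containing the cyclic subgroup ⟨α⟩ generated by (the class of) α, and in particular t^s_{(qₙ)}(𝕋) ≠ t_{(qₙ)}(𝕋). -/

import Mathlib

open Filter Topology

noncomputable section

/-- The circle group `𝕋 = ℝ/ℤ`. -/
abbrev Circle1 : Type := AddCircle (1 : ℝ)

/-- A set of naturals has natural density zero. -/
def DensityZero (A : Set ℕ) : Prop :=
  Tendsto (fun n : ℕ => ((A ∩ Set.Icc 1 n).ncard : ℝ) / n) atTop (𝓝 0)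

/-- Statistical convergence to `0` of a sequence in the circle. -/
def StatTendstoZero (x : ℕ → Circle1) : Prop :=
  ∀ ε : ℝ, 0 < ε → DensityZero {n : ℕ | ε ≤ ‖x n‖}

/-- The characterized subgroup `t_(a_n)(𝕋)`. -/
def charSet (a : ℕ → ℤ) : Set Circle1 :=
  {x : Circle1 | Tendsto (fun n : ℕ => a n • x) atTop (𝓝 0)}

/-- The statistically characterized subgroup `t^s_(a_n)(𝕋)`. -/
def statCharSet (a : ℕ → ℤ) : Set Circle1 :=
  {x : Circle1 | StatTendstoZero (fun n : ℕ => a n • x)}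

namespace CF

/-- Gauss-map orbit of `α`: `G α 0 = α`, `G α (n+1) = {1 / G α n}`. -/
def G (α : ℝ) : ℕ → ℝ
  | 0 => α
  | n + 1 => Int.fract (G α n)⁻¹

/-- The partial quotients of the regular continued fraction `α = [0; a 1, a 2, …]`
(with the convention `a 0 = 0`). -/
def a (α : ℝ) : ℕ → ℕ
  | 0 => 0
  | n + 1 => ⌊(G α n)⁻¹⌋₊

/-- Denominators of the convergents of the continued fraction of `α`. -/
def q (α : ℝ) : ℕ → ℕ
  | 0 => 1
  | 1 => a α 1
  | (n + 2) => a α (n + 2) * q α (n + 1) + q α n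

/-- Numerators of the convergents of the continued fraction of `α`. -/
def p (α : ℝ) : ℕ → ℕ
  | 0 => 0
  | 1 => 1
  | (n + 2) => a α (n + 2) * p α (n + 1) + p α n

/-- `θ n = q n * α - p n`. -/
def θ (α : ℝ) (n : ℕ) : ℝ := (q α n : ℝ) * α - (p α n : ℝ)

end CF

open CF

namespace CF

lemma G_irrational {α : ℝ} (hirr : Irrational α) (n : ℕ) : Irrational (G α n) := by
  induction n with
  | zero => exact hirr
  | succ n ih =>
    have h := ih.inv.sub_intCast ⌊(G α n)⁻¹⌋
    rwa [Int.self_sub_floor] at h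

lemma G_mem_Ioo {α : ℝ} (hα : α ∈ Set.Ioo (0 : ℝ) 1) (hirr : Irrational α) (n : ℕ) :
    G α n ∈ Set.Ioo (0 : ℝ) 1 := by
  cases n with
  | zero => exact hα
  | succ n =>
    exact ⟨lt_of_le_of_ne (Int.fract_nonneg _) (G_irrational hirr (n + 1)).ne_zero.symm,
      Int.fract_lt_one _⟩

lemma inv_G {α : ℝ} (hα : α ∈ Set.Ioo (0 : ℝ) 1) (hirr : Irrational α) (n : ℕ) :
    (G α n)⁻¹ = a α (n + 1) + G α (n + 1) := by
  have h0 : 0 ≤ (G α n)⁻¹ := inv_nonneg.2 (G_mem_Ioo hα hirr n).1.le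
  have h : ((a α (n + 1) : ℕ) : ℝ) = ((⌊(G α n)⁻¹⌋ : ℤ) : ℝ) := natCast_floor_eq_intCast_floor h0
  rw [h]
  exact (Int.floor_add_fract _).symm

lemma G_mul_add {α : ℝ} (hα : α ∈ Set.Ioo (0 : ℝ) 1) (hirr : Irrational α) (n : ℕ) :
    G α n * (a α (n + 1) + G α (n + 1)) = 1 := by
  rw [← inv_G hα hirr n]
  exact mul_inv_cancel₀ (G_mem_Ioo hα hirr n).1.ne'

lemma one_le_a {α : ℝ} (hα : α ∈ Set.Ioo (0 : ℝ) 1) (hirr : Irrational α) (n : ℕ) :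
    1 ≤ a α (n + 1) := by
  have h := G_mem_Ioo hα hirr n
  exact Nat.le_floor (by simpa using (one_le_inv₀ h.1).2 h.2.le)

lemma q_le_succ {α : ℝ} (hα : α ∈ Set.Ioo (0 : ℝ) 1) (hirr : Irrational α) (n : ℕ) :
    q α n ≤ q α (n + 1) := by
  cases n with
  | zero => exact one_le_a hα hirr 0
  | succ n =>
    calc q α (n + 1) ≤ a α (n + 2) * q α (n + 1) :=
          Nat.le_mul_of_pos_left _ (one_le_a hα hirr (n + 1))
      _ ≤ q α (n + 2) := Nat.le_add_right _ _

lemma q_pos {α : ℝ} (hα : α ∈ Set.Ioo (0 : ℝ) 1) (hirr : Irrational α) (n : ℕ) :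
    0 < q α n := by
  induction n with
  | zero => exact Nat.one_pos
  | succ n ih => exact ih.trans_le (q_le_succ hα hirr n)

lemma two_mul_q_le {α : ℝ} (hα : α ∈ Set.Ioo (0 : ℝ) 1) (hirr : Irrational α) (n : ℕ) :
    2 * q α n ≤ q α (n + 2) := by
  have h1 := q_le_succ hα hirr n
  have h2 : q α (n + 1) ≤ a α (n + 2) * q α (n + 1) :=
    Nat.le_mul_of_pos_left _ (one_le_a hα hirr (n + 1))
  have h3 : q α (n + 2) = a α (n + 2) * q α (n + 1) + q α n := rfl
  omega

lemma q_succ_le {α : ℝ} (hα : α ∈ Set.Ioo (0 : ℝ) 1) (hirr : Irrational α)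
    {M : ℕ} (hbd : ∀ n, 1 ≤ n → a α n ≤ M) (n : ℕ) :
    q α (n + 1) ≤ (M + 1) * q α n := by
  cases n with
  | zero =>
    have h := hbd 1 le_rfl
    simp only [q]
    omega
  | succ n =>
    have h1 := q_le_succ hα hirr n
    have h2 := Nat.mul_le_mul_right (q α (n + 1)) (hbd (n + 2) (by omega))
    have h3 : q α (n + 2) = a α (n + 2) * q α (n + 1) + q α n := rfl
    rw [h3, add_mul, one_mul]
    omega

lemma q_le_geometric {α : ℝ} (hα : α ∈ Set.Ioo (0 : ℝ) 1) (hirr : Irrational α) (n d : ℕ) :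
    (q α n : ℝ) ≤ 2 * (3 / 4) ^ d * q α (n + d) := by
  induction d using Nat.strong_induction_on with
  | _ d ih =>
    have hq : (0 : ℝ) < q α n := by exact_mod_cast q_pos hα hirr n
    match d, ih with
    | 0, _ => norm_num; linarith
    | 1, _ =>
      have h : (q α n : ℝ) ≤ q α (n + 1) := by exact_mod_cast q_le_succ hα hirr n
      norm_num
      linarith
    | d + 2, ih =>
      have h1 := ih d (by omega)
      have h2 : 2 * (q α (n + d) : ℝ) ≤ q α (n + (d + 2)) := by
        exact_mod_cast two_mul_q_le hα hirr (n + d)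
      have h3 : (0 : ℝ) < (3 / 4) ^ d := by positivity
      have h4 := mul_le_mul_of_nonneg_left h2 h3.le
      have h5 : (0 : ℝ) ≤ (3 / 4) ^ d * q α (n + d) := by positivity
      rw [pow_add]
      nlinarith

lemma q_le_geometric_of_le {α : ℝ} (hα : α ∈ Set.Ioo (0 : ℝ) 1) (hirr : Irrational α)
    {L n d : ℕ} (hL : L ≤ d) :
    (q α n : ℝ) ≤ 2 * (7 / 8) ^ L * (7 / 8) ^ d * q α (n + d) := by
  refine (q_le_geometric hα hirr n d).trans ?_
  refine mul_le_mul_of_nonneg_right ?_ (Nat.cast_nonneg _)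
  rw [mul_assoc]
  refine mul_le_mul_of_nonneg_left ?_ two_pos.le
  calc (3 / 4 : ℝ) ^ d ≤ (7 / 8 * (7 / 8)) ^ d := by gcongr; norm_num
    _ = (7 / 8) ^ d * (7 / 8) ^ d := mul_pow _ _ _
    _ ≤ (7 / 8) ^ L * (7 / 8) ^ d := by
      refine mul_le_mul_of_nonneg_right ?_ (by positivity)
      exact pow_le_pow_of_le_one (by norm_num) (by norm_num) hL

lemma θ_succ {α : ℝ} (hα : α ∈ Set.Ioo (0 : ℝ) 1) (hirr : Irrational α) (n : ℕ) :
    θ α (n + 1) = -G α (n + 1) * θ α n := by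
  induction n with
  | zero =>
    have h := G_mul_add hα hirr 0
    simp only [θ, q, p, G] at h ⊢
    push_cast
    linarith
  | succ n ih =>
    have h := G_mul_add hα hirr (n + 1)
    have h1 : θ α (n + 2) = a α (n + 2) * θ α (n + 1) + θ α n := by
      simp only [θ, q, p]
      push_cast
      ring
    rw [show n + 1 + 1 = n + 2 from rfl] at h ⊢
    rw [h1, ih]
    linear_combination (-θ α n) * h

/-- The classical identity `|θ n| = 1 / (q (n + 1) + G (n + 1) * q n)`. -/
lemma q_add_mul_abs_θ {α : ℝ} (hα : α ∈ Set.Ioo (0 : ℝ) 1) (hirr : Irrational α) (n : ℕ) :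
    (q α (n + 1) + G α (n + 1) * q α n) * |θ α n| = 1 := by
  induction n with
  | zero =>
    have h := G_mul_add hα hirr 0
    have h1 : θ α 0 = α := by simp [θ, q, p]
    rw [h1, abs_of_pos hα.1]
    simp only [q, G] at h ⊢
    push_cast
    linarith
  | succ n ih =>
    have h := G_mul_add hα hirr (n + 1)
    rw [show n + 1 + 1 = n + 2 from rfl] at h ⊢
    rw [θ_succ hα hirr n, abs_mul, abs_neg, abs_of_pos (G_mem_Ioo hα hirr (n + 1)).1]
    simp only [q]
    push_cast
    linear_combination ih + (q α (n + 1) : ℝ) * |θ α n| * h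

lemma q_mul_abs_θ_le {α : ℝ} (hα : α ∈ Set.Ioo (0 : ℝ) 1) (hirr : Irrational α) (n : ℕ) :
    q α n * |θ α n| ≤ 1 := by
  have h := q_add_mul_abs_θ hα hirr n
  have h1 : (q α n : ℝ) ≤ q α (n + 1) := by exact_mod_cast q_le_succ hα hirr n
  have h2 : 0 ≤ G α (n + 1) * q α n :=
    mul_nonneg (G_mem_Ioo hα hirr (n + 1)).1.le (Nat.cast_nonneg _)
  nlinarith [abs_nonneg (θ α n)]

lemma q_mul_abs_θ_le_geometric {α : ℝ} (hα : α ∈ Set.Ioo (0 : ℝ) 1) (hirr : Irrational α)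
    {L n d : ℕ} (hL : L ≤ d) :
    q α n * |θ α (n + d)| ≤ 2 * (7 / 8) ^ L * (7 / 8) ^ d := by
  have h1 := mul_le_mul_of_nonneg_right (q_le_geometric_of_le hα hirr (n := n) hL)
    (abs_nonneg (θ α (n + d)))
  have h2 := q_mul_abs_θ_le hα hirr (n + d)
  have h3 : (0 : ℝ) ≤ 2 * (7 / 8) ^ L * (7 / 8) ^ d := by positivity
  nlinarith

lemma abs_θ_le_geometric {α : ℝ} (hα : α ∈ Set.Ioo (0 : ℝ) 1) (hirr : Irrational α) (n : ℕ) :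
    |θ α n| ≤ 2 * (7 / 8) ^ n := by
  have h := q_mul_abs_θ_le_geometric hα hirr (n := 0) (Nat.zero_le n)
  simpa [q] using h

lemma norm_q_mul_θ_ge {α : ℝ} (hα : α ∈ Set.Ioo (0 : ℝ) 1) (hirr : Irrational α)
    {M : ℕ} (hbd : ∀ n, 1 ≤ n → a α n ≤ M) (n : ℕ) :
    1 / ((M + 2) * (M + 2) : ℝ) ≤ ‖((q α n * θ α n : ℝ) : Circle1)‖ := by
  have hid := q_add_mul_abs_θ hα hirr n
  have hG := G_mem_Ioo hα hirr (n + 1)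
  have hGm := G_mul_add hα hirr (n + 1)
  have hG' := G_mem_Ioo hα hirr (n + 2)
  have ha : (a α (n + 2) : ℝ) ≤ M := by exact_mod_cast hbd (n + 2) (by omega)
  have hq1 : (q α n : ℝ) ≤ q α (n + 1) := by exact_mod_cast q_le_succ hα hirr n
  have hq2 : (q α (n + 1) : ℝ) ≤ (M + 1) * q α n := by exact_mod_cast q_succ_le hα hirr hbd n
  have hM : (0 : ℝ) ≤ M := Nat.cast_nonneg _
  have hq0 : (0 : ℝ) < q α n := by exact_mod_cast q_pos hα hirr n
  have hθ := abs_nonneg (θ α n)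
  have hGlow : 1 ≤ G α (n + 1) * (M + 2) := by
    rw [← hGm]
    refine mul_le_mul_of_nonneg_left ?_ hG.1.le
    change (a α (n + 2) : ℝ) + G α (n + 2) ≤ M + 2
    linarith [hG'.2]
  set u : ℝ := q α n * |θ α n| with hu
  have hu0 : 0 ≤ u := by positivity
  have hulow : 1 ≤ (M + 2) * u := by
    rw [hu, ← hid]
    have : (q α (n + 1) : ℝ) + G α (n + 1) * q α n ≤ (M + 2) * q α n := by
      nlinarith [hG.2]
    nlinarith
  have huup : G α (n + 1) * u ≤ 1 - u := by
    have : (q α n : ℝ) * |θ α n| ≤ q α (n + 1) * |θ α n| :=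
      mul_le_mul_of_nonneg_right hq1 hθ
    nlinarith
  have hδ : 1 / ((M + 2) * (M + 2) : ℝ) ≤ u ∧ 1 / ((M + 2) * (M + 2) : ℝ) ≤ 1 - u := by
    have hGu : 1 ≤ ((M + 2) * (M + 2)) * (G α (n + 1) * u) := by
      nlinarith [mul_le_mul hGlow hulow zero_le_one (by nlinarith [hG.1])]
    have h1 : 1 / ((M + 2) * (M + 2) : ℝ) ≤ G α (n + 1) * u := by
      rw [div_le_iff₀ (by positivity)]
      linarith
    exact ⟨h1.trans (by nlinarith [hG.2]), h1.trans huup⟩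
  have habs : |(q α n * θ α n : ℝ)| = u := by rw [abs_mul, Nat.abs_cast]
  rw [UnitAddCircle.norm_eq]
  set y : ℝ := q α n * θ α n
  rcases eq_or_ne (round y) 0 with h0 | h0
  · rw [h0]
    simpa [habs] using hδ.1
  · have h1 : (1 : ℝ) ≤ |((round y : ℤ) : ℝ)| := by exact_mod_cast Int.one_le_abs h0
    have h2 := abs_sub_abs_le_abs_sub ((round y : ℤ) : ℝ) y
    rw [abs_sub_comm] at h2
    linarith [hδ.2]

/-- The real number `∑ m, c m * θ m`. -/
def θSum (α : ℝ) (c : ℕ → ℤ) : ℝ := ∑' m, (c m : ℝ) * θ α m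

lemma abs_intCast_le_one {z : ℤ} (hz : |z| ≤ 1) : |(z : ℝ)| ≤ 1 := by exact_mod_cast hz

lemma summable_θ {α : ℝ} (hα : α ∈ Set.Ioo (0 : ℝ) 1) (hirr : Irrational α)
    {c : ℕ → ℤ} (hc : ∀ m, |c m| ≤ 1) : Summable fun m => (c m : ℝ) * θ α m := by
  refine Summable.of_norm_bounded
    ((summable_geometric_of_lt_one (r := (7 / 8 : ℝ)) (by norm_num) (by norm_num)).mul_left 2)
    fun m => ?_
  rw [Real.norm_eq_abs, abs_mul]
  have h1 := abs_intCast_le_one (hc m)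
  have h2 := abs_θ_le_geometric hα hirr m
  nlinarith [abs_nonneg (θ α m)]

lemma θSum_sub {α : ℝ} (hα : α ∈ Set.Ioo (0 : ℝ) 1) (hirr : Irrational α)
    {c c' : ℕ → ℤ} (hc : ∀ m, |c m| ≤ 1) (hc' : ∀ m, |c' m| ≤ 1) :
    θSum α (fun m => c m - c' m) = θSum α c - θSum α c' := by
  unfold θSum
  rw [← (summable_θ hα hirr hc).tsum_sub (summable_θ hα hirr hc')]
  simp only [Int.cast_sub, sub_mul]

lemma q_mul_θSum {α : ℝ} (hα : α ∈ Set.Ioo (0 : ℝ) 1) (hirr : Irrational α)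
    {c : ℕ → ℤ} (hc : ∀ m, |c m| ≤ 1) (n : ℕ) :
    q α n * θSum α c - c n * (q α n * θ α n) =
      (∑ m ∈ Finset.range n, (c m : ℝ) * (q α m * θ α n)) +
      (∑' j, (c (n + (j + 1)) : ℝ) * (q α n * θ α (n + (j + 1)))) +
      ((∑ m ∈ Finset.range n, c m * (q α m * p α n - q α n * p α m) : ℤ) : ℝ) := by
  have h := (summable_θ hα hirr hc).sum_add_tsum_nat_add (n + 1)
  rw [Finset.sum_range_succ] at h
  have h1 : (∑' j, (c (n + (j + 1)) : ℝ) * (q α n * θ α (n + (j + 1)))) =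
      q α n * ∑' j, (c (j + (n + 1)) : ℝ) * θ α (j + (n + 1)) := by
    rw [← tsum_mul_left]
    refine tsum_congr fun j => ?_
    rw [show n + (j + 1) = j + (n + 1) by omega]
    ring
  have h2 : q α n * ∑ m ∈ Finset.range n, (c m : ℝ) * θ α m =
      (∑ m ∈ Finset.range n, (c m : ℝ) * (q α m * θ α n)) +
      ((∑ m ∈ Finset.range n, c m * (q α m * p α n - q α n * p α m) : ℤ) : ℝ) := by
    push_cast
    rw [Finset.mul_sum, ← Finset.sum_add_distrib]
    refine Finset.sum_congr rfl fun m _ => ?_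
    simp only [θ]
    ring
  rw [h1, θSum, ← h]
  linear_combination h2

lemma norm_q_smul_θSum_sub_le {α : ℝ} (hα : α ∈ Set.Ioo (0 : ℝ) 1) (hirr : Irrational α)
    {c : ℕ → ℤ} (hc : ∀ m, |c m| ≤ 1) {n L : ℕ}
    (hn : ∀ m, m ≠ n → c m ≠ 0 → m + L ≤ n ∨ n + L ≤ m) :
    ‖(q α n : ℤ) • (θSum α c : Circle1) - ((c n * (q α n * θ α n) : ℝ) : Circle1)‖ ≤
      32 * (7 / 8) ^ L := by
  have hgeo : Summable fun j : ℕ => (7 / 8 : ℝ) ^ j :=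
    summable_geometric_of_lt_one (by norm_num) (by norm_num)
  have hgeosum : ∑' j : ℕ, (7 / 8 : ℝ) ^ j = 8 := by
    rw [tsum_geometric_of_lt_one (by norm_num) (by norm_num)]
    norm_num
  have hlow : |∑ m ∈ Finset.range n, (c m : ℝ) * (q α m * θ α n)| ≤ 16 * (7 / 8) ^ L := by
    calc |∑ m ∈ Finset.range n, (c m : ℝ) * (q α m * θ α n)|
        ≤ ∑ m ∈ Finset.range n, |(c m : ℝ) * (q α m * θ α n)| := Finset.abs_sum_le_sum_abs _ _
      _ ≤ ∑ m ∈ Finset.range n, 2 * (7 / 8 : ℝ) ^ L * (7 / 8) ^ (n - 1 - m) := by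
        refine Finset.sum_le_sum fun m hm => ?_
        rw [Finset.mem_range] at hm
        by_cases h0 : c m = 0
        · simp only [h0, Int.cast_zero, zero_mul, abs_zero]
          positivity
        · have hL : L ≤ n - m := by
            rcases hn m hm.ne h0 with h | h <;> omega
          have h1 := q_mul_abs_θ_le_geometric hα hirr (n := m) hL
          rw [Nat.add_sub_cancel' hm.le] at h1
          have h2 : (7 / 8 : ℝ) ^ (n - m) ≤ (7 / 8) ^ (n - 1 - m) :=
            pow_le_pow_of_le_one (by norm_num) (by norm_num) (by omega)
          rw [abs_mul, abs_mul, Nat.abs_cast]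
          calc |(c m : ℝ)| * (q α m * |θ α n|) ≤ 1 * (q α m * |θ α n|) :=
                mul_le_mul_of_nonneg_right (abs_intCast_le_one (hc m)) (by positivity)
            _ ≤ 2 * (7 / 8) ^ L * (7 / 8) ^ (n - m) := by rwa [one_mul]
            _ ≤ _ := mul_le_mul_of_nonneg_left h2 (by positivity)
      _ = 2 * (7 / 8 : ℝ) ^ L * ∑ j ∈ Finset.range n, (7 / 8 : ℝ) ^ j := by
        rw [← Finset.mul_sum, Finset.sum_range_reflect (fun j => (7 / 8 : ℝ) ^ j)]
      _ ≤ 2 * (7 / 8 : ℝ) ^ L * 8 := by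
        refine mul_le_mul_of_nonneg_left ?_ (by positivity)
        exact (hgeo.sum_le_tsum _ fun _ _ => by positivity).trans_eq hgeosum
      _ = 16 * (7 / 8) ^ L := by ring
  have hhigh : |∑' j, (c (n + (j + 1)) : ℝ) * (q α n * θ α (n + (j + 1)))| ≤
      16 * (7 / 8) ^ L := by
    have hs : HasSum (fun j : ℕ => 2 * (7 / 8 : ℝ) ^ L * (7 / 8) ^ j) (16 * (7 / 8) ^ L) := by
      have h := hgeo.hasSum.mul_left (2 * (7 / 8 : ℝ) ^ L)
      rwa [hgeosum, show 2 * (7 / 8 : ℝ) ^ L * 8 = 16 * (7 / 8) ^ L by ring] at h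
    rw [← Real.norm_eq_abs]
    refine tsum_of_norm_bounded hs fun j => ?_
    rw [Real.norm_eq_abs]
    by_cases h0 : c (n + (j + 1)) = 0
    · simp only [h0, Int.cast_zero, zero_mul, abs_zero]
      positivity
    · have hL : L ≤ j + 1 := by
        rcases hn _ (by omega) h0 with h | h <;> omega
      have h1 := q_mul_abs_θ_le_geometric hα hirr (n := n) hL
      have h2 : (7 / 8 : ℝ) ^ (j + 1) ≤ (7 / 8) ^ j :=
        pow_le_pow_of_le_one (by norm_num) (by norm_num) (by omega)
      rw [abs_mul, abs_mul, Nat.abs_cast]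
      calc |(c (n + (j + 1)) : ℝ)| * (q α n * |θ α (n + (j + 1))|)
          ≤ 1 * (q α n * |θ α (n + (j + 1))|) :=
            mul_le_mul_of_nonneg_right (abs_intCast_le_one (hc _)) (by positivity)
        _ ≤ 2 * (7 / 8) ^ L * (7 / 8) ^ (j + 1) := by rwa [one_mul]
        _ ≤ _ := mul_le_mul_of_nonneg_left h2 (by positivity)
  have hcast : (q α n : ℤ) • (θSum α c : Circle1) - ((c n * (q α n * θ α n) : ℝ) : Circle1) =
      ((q α n * θSum α c - c n * (q α n * θ α n) : ℝ) : Circle1) := by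
    rw [AddCircle.coe_sub, ← AddCircle.coe_zsmul, zsmul_eq_mul, Int.cast_natCast]
  rw [hcast, q_mul_θSum hα hirr hc n, UnitAddCircle.norm_eq]
  set z : ℤ := ∑ m ∈ Finset.range n, c m * (q α m * p α n - q α n * p α m)
  refine (round_le _ z).trans ?_
  rw [add_sub_cancel_right]
  refine (abs_add_le _ _).trans ?_
  linarith

end CF

/-- The naturals at distance less than `L` from some power of two. -/
def nearPowTwo (L : ℕ) : Set ℕ := {n | ∃ k, n < 2 ^ k + L ∧ 2 ^ k < n + L}

lemma densityZero_of_ncard_le {A : Set ℕ} (C : ℕ)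
    (h : ∀ᶠ n in atTop, (A ∩ Set.Icc 1 n).ncard ≤ C * (Nat.log 2 n + 2)) : DensityZero A := by
  have hlog : Tendsto (fun n : ℕ => Real.log n / n) atTop (𝓝 0) :=
    (Real.isLittleO_log_id_atTop.tendsto_div_nhds_zero).comp tendsto_natCast_atTop_atTop
  have hinv : Tendsto (fun n : ℕ => (2 : ℝ) / n) atTop (𝓝 0) :=
    tendsto_const_div_atTop_nhds_zero_nat 2
  have hlim : Tendsto (fun n : ℕ => C * ((Real.log 2)⁻¹ * (Real.log n / n) + 2 / n)) atTop
      (𝓝 0) := by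
    simpa using ((hlog.const_mul (Real.log 2)⁻¹).add hinv).const_mul (C : ℝ)
  refine squeeze_zero' (Eventually.of_forall fun n => by positivity) ?_ hlim
  filter_upwards [h] with n hn
  have h1 : ((A ∩ Set.Icc 1 n).ncard : ℝ) ≤ C * (Nat.log 2 n + 2) := by exact_mod_cast hn
  have h2 : (Nat.log 2 n : ℝ) ≤ (Real.log 2)⁻¹ * Real.log n := by
    have := Real.natLog_le_logb n 2
    rwa [Real.logb, Nat.cast_ofNat, div_eq_inv_mul] at this
  calc ((A ∩ Set.Icc 1 n).ncard : ℝ) / n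
      ≤ C * ((Real.log 2)⁻¹ * Real.log n + 2) / n := by gcongr; exact h1.trans (by gcongr)
    _ = _ := by ring

lemma DensityZero.mono {A B : Set ℕ} (hB : DensityZero B) (h : A ⊆ B) : DensityZero A := by
  refine squeeze_zero (fun n => by positivity) (fun n => ?_) hB
  have := Set.ncard_le_ncard (Set.inter_subset_inter_left (Set.Icc 1 n) h)
    ((Set.finite_Icc 1 n).inter_of_right B)
  gcongr

lemma Set.Finite.densityZero {A : Set ℕ} (hA : A.Finite) : DensityZero A := by
  refine densityZero_of_ncard_le A.ncard (Eventually.of_forall fun n => ?_)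
  have h := Set.ncard_le_ncard (Set.inter_subset_left : A ∩ Set.Icc 1 n ⊆ A) hA
  nlinarith

lemma densityZero_nearPowTwo (L : ℕ) : DensityZero (nearPowTwo L) := by
  refine densityZero_of_ncard_le (2 * L) ?_
  filter_upwards [eventually_ge_atTop (L + 1)] with N hN
  have hsub : nearPowTwo L ∩ Set.Icc 1 N ⊆
      ((Finset.range (2 * L) ×ˢ Finset.range (Nat.log 2 N + 2)).image
        fun t => 2 ^ t.2 + t.1 - L : Finset ℕ) := by
    rintro n ⟨⟨k, hk1, hk2⟩, hn1, hn2⟩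
    simp only [Finset.coe_image, Set.mem_image, Finset.mem_coe, Finset.mem_product,
      Finset.mem_range]
    refine ⟨(n + L - 2 ^ k, k), ⟨by omega, ?_⟩, by dsimp only; omega⟩
    have h1 := Nat.lt_pow_succ_log_self one_lt_two N
    have h2 : 2 ^ k < 2 ^ (Nat.log 2 N + 2) := by
      rw [pow_succ]
      simp only [Nat.succ_eq_add_one] at h1
      omega
    exact (Nat.pow_lt_pow_iff_right one_lt_two).1 h2
  refine (Set.ncard_le_ncard hsub (Finset.finite_toSet _)).trans ?_
  rw [Set.ncard_coe_finset]
  exact Finset.card_image_le.trans (by simp)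

lemma two_pow_add_le_or {j k L : ℕ} (hjk : j ≠ k) (hL : L < k) :
    2 ^ j + L ≤ 2 ^ k ∨ 2 ^ k + L ≤ 2 ^ j := by
  have hLk : L < 2 ^ L := Nat.lt_two_pow_self
  rcases lt_or_gt_of_ne hjk with h | h
  · left
    have h1 : 2 ^ j ≤ 2 ^ (k - 1) := Nat.pow_le_pow_right two_pos (by omega)
    have h2 : 2 ^ L ≤ 2 ^ (k - 1) := Nat.pow_le_pow_right two_pos (by omega)
    have h3 : 2 ^ k = 2 ^ (k - 1) * 2 := by rw [← pow_succ, Nat.sub_add_cancel (by omega)]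
    omega
  · right
    have h1 : 2 ^ (k + 1) ≤ 2 ^ j := Nat.pow_le_pow_right two_pos h
    have h2 : 2 ^ L ≤ 2 ^ k := Nat.pow_le_pow_right two_pos hL.le
    rw [pow_succ] at h1
    omega

namespace CF

lemma exists_geometric_lt {ε : ℝ} (hε : 0 < ε) : ∃ L : ℕ, 32 * (7 / 8 : ℝ) ^ L < ε := by
  obtain ⟨L, hL⟩ := exists_pow_lt_of_lt_one (show 0 < ε / 32 by positivity)
    (show (7 / 8 : ℝ) < 1 by norm_num)
  exact ⟨L, by linarith⟩

lemma θSum_mem_statCharSet {α : ℝ} (hα : α ∈ Set.Ioo (0 : ℝ) 1) (hirr : Irrational α)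
    {c : ℕ → ℤ} (hc : ∀ m, |c m| ≤ 1) (hsupp : ∀ m, c m ≠ 0 → ∃ k, m = 2 ^ k) :
    (θSum α c : Circle1) ∈ statCharSet (fun n => (q α n : ℤ)) := by
  intro ε hε
  obtain ⟨L, hL⟩ := exists_geometric_lt hε
  refine (densityZero_nearPowTwo (L + 1)).mono fun n hn => ?_
  by_contra hfar
  have hfar' : ∀ m, c m ≠ 0 → m + (L + 1) ≤ n ∨ n + (L + 1) ≤ m := by
    intro m hm
    obtain ⟨k, rfl⟩ := hsupp m hm
    by_contra hcon
    exact hfar ⟨k, by omega, by omega⟩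
  have hcn : c n = 0 := by
    by_contra h
    have := hfar' n h
    omega
  have h := norm_q_smul_θSum_sub_le hα hirr hc (n := n) (L := L) fun m _ hm => by
    have := hfar' m hm
    omega
  rw [hcn, Int.cast_zero, zero_mul, AddCircle.coe_zero, sub_zero] at h
  have hn' : ε ≤ ‖(q α n : ℤ) • (θSum α c : Circle1)‖ := hn
  linarith

lemma θSum_notMem_charSet {α : ℝ} (hα : α ∈ Set.Ioo (0 : ℝ) 1) (hirr : Irrational α)
    {M : ℕ} (hbd : ∀ n, 1 ≤ n → a α n ≤ M)
    {c : ℕ → ℤ} (hc : ∀ m, |c m| ≤ 1) (hsupp : ∀ m, c m ≠ 0 → ∃ k, m = 2 ^ k)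
    (hinf : ∀ K, ∃ k, K ≤ k ∧ c (2 ^ k) ≠ 0) :
    (θSum α c : Circle1) ∉ charSet (fun n => (q α n : ℤ)) := by
  intro hmem
  have hδ : (0 : ℝ) < 1 / ((M + 2) * (M + 2) : ℝ) := by positivity
  set δ : ℝ := 1 / ((M + 2) * (M + 2) : ℝ)
  have hmem' : Tendsto (fun n : ℕ => (q α n : ℤ) • (θSum α c : Circle1)) atTop (𝓝 0) := hmem
  have hev := (tendsto_zero_iff_norm_tendsto_zero.1 hmem').eventually_lt_const (half_pos hδ)
  obtain ⟨N, hN⟩ := eventually_atTop.1 hev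
  obtain ⟨L, hL⟩ := exists_geometric_lt (half_pos hδ)
  obtain ⟨k, hk, hck⟩ := hinf (max N (L + 1))
  have hNk : N ≤ 2 ^ k := (le_of_max_le_left hk).trans Nat.lt_two_pow_self.le
  have h1 := hN _ hNk
  have h2 := norm_q_smul_θSum_sub_le hα hirr hc (n := 2 ^ k) (L := L) fun m hm hcm => by
    obtain ⟨j, rfl⟩ := hsupp m hcm
    exact two_pow_add_le_or (fun h => hm (by rw [h])) (le_of_max_le_right hk)
  have h3 : ‖((c (2 ^ k) * (q α (2 ^ k) * θ α (2 ^ k)) : ℝ) : Circle1)‖ =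
      ‖((q α (2 ^ k) * θ α (2 ^ k) : ℝ) : Circle1)‖ := by
    have hb := abs_le.1 (hc (2 ^ k))
    have : c (2 ^ k) = 1 ∨ c (2 ^ k) = -1 := by omega
    rcases this with h | h
    · rw [h, Int.cast_one, one_mul]
    · rw [h, Int.cast_neg, Int.cast_one, neg_one_mul, AddCircle.coe_neg, norm_neg]
  have h4 := norm_q_mul_θ_ge hα hirr hbd (2 ^ k)
  have h5 := norm_sub_norm_le ((c (2 ^ k) * (q α (2 ^ k) * θ α (2 ^ k)) : ℝ) : Circle1)
    ((q α (2 ^ k) : ℤ) • (θSum α c : Circle1))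
  rw [norm_sub_rev, h3] at h5
  linarith

open Classical in
/-- The indicator of `{2 ^ k : (Nat.unpair k).1 ∈ A}`; distinct sets `A` give indicators which
differ infinitely often. -/
def powTwoCode (A : Set ℕ) (m : ℕ) : ℤ :=
  if ∃ k, m = 2 ^ k ∧ (Nat.unpair k).1 ∈ A then 1 else 0

lemma powTwoCode_mem (A : Set ℕ) (m : ℕ) : powTwoCode A m = 0 ∨ powTwoCode A m = 1 := by
  unfold powTwoCode
  split_ifs <;> simp

lemma exists_of_powTwoCode_ne_zero {A : Set ℕ} {m : ℕ} (h : powTwoCode A m ≠ 0) :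
    ∃ k, m = 2 ^ k := by
  unfold powTwoCode at h
  split_ifs at h with hk
  · exact hk.imp fun _ => And.left
  · exact absurd rfl h

lemma powTwoCode_two_pow_pair_eq_one_iff {A : Set ℕ} {i j : ℕ} :
    powTwoCode A (2 ^ Nat.pair i j) = 1 ↔ i ∈ A := by
  have : (∃ k, 2 ^ Nat.pair i j = 2 ^ k ∧ (Nat.unpair k).1 ∈ A) ↔ i ∈ A := by
    constructor
    · rintro ⟨k, hk, hA⟩
      rwa [← Nat.pow_right_injective le_rfl hk, Nat.unpair_pair] at hA
    · exact fun h => ⟨_, rfl, by rwa [Nat.unpair_pair]⟩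
  unfold powTwoCode
  split_ifs with h
  · exact iff_of_true rfl (this.1 h)
  · exact iff_of_false zero_ne_one fun hi => h (this.2 hi)

lemma abs_powTwoCode_le (A : Set ℕ) (m : ℕ) : |powTwoCode A m| ≤ 1 := by
  rcases powTwoCode_mem A m with h | h <;> simp [h]

lemma θSum_powTwoCode_sub_notMem_charSet {α : ℝ} (hα : α ∈ Set.Ioo (0 : ℝ) 1)
    (hirr : Irrational α) {M : ℕ} (hbd : ∀ n, 1 ≤ n → a α n ≤ M) {A B : Set ℕ} (hAB : A ≠ B) :
    (θSum α (powTwoCode A) : Circle1) - (θSum α (powTwoCode B) : Circle1) ∉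
      charSet (fun n => (q α n : ℤ)) := by
  rw [← AddCircle.coe_sub, ← θSum_sub hα hirr (abs_powTwoCode_le A) (abs_powTwoCode_le B)]
  refine θSum_notMem_charSet hα hirr hbd (fun m => ?_) (fun m hm => ?_) fun K => ?_
  · rcases powTwoCode_mem A m with h | h <;> rcases powTwoCode_mem B m with h' | h' <;>
      simp [h, h']
  · by_cases hA : powTwoCode A m = 0
    · exact exists_of_powTwoCode_ne_zero (A := B) fun hB => hm (by rw [hA, hB, sub_zero])
    · exact exists_of_powTwoCode_ne_zero hA
  · obtain ⟨i, hi⟩ : ∃ i, ¬(i ∈ A ↔ i ∈ B) := by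
      by_contra! h
      exact hAB (Set.ext h)
    refine ⟨Nat.pair i K, Nat.right_le_pair i K, fun h => hi ?_⟩
    rw [← powTwoCode_two_pow_pair_eq_one_iff (A := A) (j := K),
      ← powTwoCode_two_pow_pair_eq_one_iff (A := B) (j := K), sub_eq_zero.1 h]

lemma zmultiples_subset_statCharSet {α : ℝ} (hα : α ∈ Set.Ioo (0 : ℝ) 1) (hirr : Irrational α) :
    (AddSubgroup.zmultiples (α : Circle1) : Set Circle1) ⊆
      statCharSet (fun n => (q α n : ℤ)) := by
  rintro x ⟨z, rfl⟩ ε hε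
  have hnorm : ∀ n, ‖(q α n : ℤ) • (z • (α : Circle1))‖ ≤ |(z : ℝ)| * (2 * (7 / 8) ^ n) := by
    intro n
    have h1 : (q α n : ℤ) • (z • (α : Circle1)) = ((q α n * (z * α) : ℝ) : Circle1) := by
      rw [← AddCircle.coe_zsmul, ← AddCircle.coe_zsmul, zsmul_eq_mul, zsmul_eq_mul,
        Int.cast_natCast]
    rw [h1, UnitAddCircle.norm_eq]
    refine (round_le _ (z * p α n)).trans ?_
    have h2 : (q α n * (z * α) : ℝ) - ((z * p α n : ℤ) : ℝ) = z * θ α n := by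
      simp only [θ]
      push_cast
      ring
    rw [h2, abs_mul]
    exact mul_le_mul_of_nonneg_left (abs_θ_le_geometric hα hirr n) (abs_nonneg _)
  have hlim : Tendsto (fun n : ℕ => |(z : ℝ)| * (2 * (7 / 8) ^ n)) atTop (𝓝 0) := by
    have h := tendsto_pow_atTop_nhds_zero_of_lt_one (r := (7 / 8 : ℝ)) (by norm_num) (by norm_num)
    simpa using (h.const_mul 2).const_mul |(z : ℝ)|
  obtain ⟨N, hN⟩ := eventually_atTop.1 (hlim.eventually_lt_const hε)
  refine ((Set.finite_Iio N).subset fun n hn => ?_).densityZero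
  by_contra hNn
  have hn' : ε ≤ ‖(q α n : ℤ) • (z • (α : Circle1))‖ := hn
  linarith [hnorm n, hN n (not_lt.1 hNn)]

end CF

/-- **Remark 2 (after Theorem B).** For bounded partial quotients, `t^s_(qₙ)(𝕋)` is an
uncountable subgroup containing `⟨α⟩`, hence `t^s_(qₙ)(𝕋) ≠ t_(qₙ)(𝕋)`. -/
theorem stmt_12 (α : ℝ) (hα : α ∈ Set.Ioo (0 : ℝ) 1) (hirr : Irrational α)
    (M : ℕ) (hbd : ∀ n, 1 ≤ n → a α n ≤ M) :
    ¬ (statCharSet (fun n => (q α n : ℤ))).Countable ∧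
    (AddSubgroup.zmultiples ((α : Circle1)) : Set Circle1) ⊆
      statCharSet (fun n => (q α n : ℤ)) ∧
    statCharSet (fun n => (q α n : ℤ)) ≠ charSet (fun n => (q α n : ℤ)) := by
  have hmem : ∀ A, (θSum α (powTwoCode A) : Circle1) ∈ statCharSet (fun n => (q α n : ℤ)) :=
    fun A => θSum_mem_statCharSet hα hirr (abs_powTwoCode_le A)
      fun _ => exists_of_powTwoCode_ne_zero
  have hzero : (0 : Circle1) ∈ charSet (fun n => (q α n : ℤ)) := by
    simp only [charSet, Set.mem_ofPred_eq, smul_zero]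
    exact tendsto_const_nhds
  have hinj : Function.Injective fun A => (θSum α (powTwoCode A) : Circle1) := by
    intro A B hAB
    by_contra hne
    exact θSum_powTwoCode_sub_notMem_charSet hα hirr hbd hne
      (by rw [sub_eq_zero.2 hAB]; exact hzero)
  refine ⟨fun hcount => ?_, zmultiples_subset_statCharSet hα hirr, fun heq => ?_⟩
  · have : Countable (Set ℕ) :=
      Set.countable_univ_iff.1 ((Set.MapsTo.countable_of_injOn (fun A _ => hmem A)
        hinj.injOn hcount))
    obtain ⟨f, hf⟩ := exists_injective_nat (Set ℕ)
    exact Function.cantor_injective f hf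
  · have hA := heq ▸ hmem Set.univ
    have hB := heq ▸ hmem ∅
    refine θSum_powTwoCode_sub_notMem_charSet hα hirr hbd Set.univ_nonempty.ne_empty ?_
    simpa only [charSet, Set.mem_ofPred_eq, smul_sub, sub_zero] using hA.sub hB
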